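/- arXiv:math/0407028 — 3 statements merged into one kernel-verified Lean document; each statement's English description precedes it below -/
import Mathlib

section
/- For fixed v ∈ ℝ³ and indices 1 ≤ k, ℓ ≤ 3, the spherical average ∫_{|ω|=1} ω_ℓ (√(1+|v|²)+ω·v)^{-3} dω = -4π v_ℓ /(each component), more precisely: v_k ∫_{|ω|=1} ω_ℓ dω/(√(1+|v|²)+ω·v)³ = -4π v_k v_ℓ + (correction): the identity ∫_{|ω|=1} ω_ℓ dω/(√(1+|v|²)+ω·v)³ = -4π v_ℓ holds... State: ∫_{|ω|=1} ω_ℓ dω/(√(1+|v|²)+ω·v)³ = -4π v_ℓ is false in general; the correct claim is: ∫_{|ω|=1} dω/(√(1+|v|²)+ω·v)³ = 4π√(1+|v|²). -/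
open MeasureTheory Real
open scoped RealInnerProductSpace

/-- The gauge `a|x| + x·v` pulled back along `y ↦ y + (v·y)/(a+1) v - v`. -/
lemma vkg_gauge_iff (v y : EuclideanSpace ℝ (Fin 3)) (a : ℝ) (ha : a ^ 2 = 1 + ‖v‖ ^ 2)
    (ha0 : 0 < a) :
    (a * ‖y + ((a + 1)⁻¹ * ⟪v, y⟫) • v - v‖ + ⟪y + ((a + 1)⁻¹ * ⟪v, y⟫) • v - v, v⟫ < 1)
      ↔ ‖y‖ < 1 := by
  have ha1 : a + 1 ≠ 0 := by positivity
  have hc : |⟪v, y⟫| ≤ ‖v‖ * ‖y‖ := abs_real_inner_le_norm v y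
  generalize ht : ⟪v, y⟫ = t at *
  have hx : y + ((a + 1)⁻¹ * t) • v - v = y + ((a + 1)⁻¹ * t - 1) • v := by module
  rw [hx]
  have hn : ‖y + ((a + 1)⁻¹ * t - 1) • v‖ ^ 2 = ‖y‖ ^ 2 - 1 + (a - t) ^ 2 := by
    rw [norm_add_sq_real, inner_smul_right, real_inner_comm, ht, norm_smul, mul_pow,
      Real.norm_eq_abs, sq_abs, show ‖v‖ ^ 2 = a ^ 2 - 1 by linarith]
    field_simp
    ring
  have hi : ⟪y + ((a + 1)⁻¹ * t - 1) • v, v⟫ = a * t - (a ^ 2 - 1) := by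
    rw [inner_add_left, inner_smul_left, real_inner_comm, ht, real_inner_self_eq_norm_sq,
      show ‖v‖ ^ 2 = a ^ 2 - 1 by linarith]
    simp only [conj_trivial]
    field_simp
    ring
  rw [hi]
  have hN := norm_nonneg (y + ((a + 1)⁻¹ * t - 1) • v)
  generalize ‖y + ((a + 1)⁻¹ * t - 1) • v‖ = N at *
  have hy0 := norm_nonneg y
  have hv0 := norm_nonneg v
  have hva : ‖v‖ < a := by nlinarith
  constructor
  · intro h
    by_contra! hy
    have h1 : a * N < a * (a - t) := by nlinarith
    have h2 : N < a - t := lt_of_mul_lt_mul_left h1 ha0.le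
    nlinarith
  · intro h
    have h1 : t < a := by
      have := le_abs_self t
      nlinarith
    have h2 : N < a - t := by nlinarith
    nlinarith

lemma vkg_volume (v : EuclideanSpace ℝ (Fin 3)) (a : ℝ) (ha : a ^ 2 = 1 + ‖v‖ ^ 2)
    (ha0 : 0 < a) :
    volume {x : EuclideanSpace ℝ (Fin 3) | a * ‖x‖ + ⟪x, v⟫ < 1}
      = ENNReal.ofReal (a * (π * 4 / 3)) := by
  set S := {x : EuclideanSpace ℝ (Fin 3) | a * ‖x‖ + ⟪x, v⟫ < 1} with hS
  let L : EuclideanSpace ℝ (Fin 3) →ₗ[ℝ] EuclideanSpace ℝ (Fin 3) :=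
    LinearMap.transvection ((a + 1)⁻¹ • (innerₛₗ ℝ v)) v
  have hL : ∀ y, L y = y + ((a + 1)⁻¹ * ⟪v, y⟫) • v := by
    intro y
    simp [L, LinearMap.transvection.apply]
  have hdet : LinearMap.det L = a := by
    have ha1 : a + 1 ≠ 0 := by positivity
    simp only [L]
    rw [LinearMap.transvection.det]
    simp only [LinearMap.smul_apply, innerₛₗ_apply_apply, smul_eq_mul, real_inner_self_eq_norm_sq]
    rw [show ‖v‖ ^ 2 = a ^ 2 - 1 by linarith]
    field_simp
    ring
  have h1 : L ⁻¹' ((fun z => z - v) ⁻¹' S) = Metric.ball 0 1 := by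
    ext y
    rw [Set.mem_preimage, Set.mem_preimage, hL, hS, Set.mem_setOf_eq, vkg_gauge_iff v y a ha ha0,
      mem_ball_zero_iff]
  have h2 := Measure.addHaar_preimage_linearMap (volume : Measure (EuclideanSpace ℝ (Fin 3)))
    (f := L) (by rw [hdet]; exact ha0.ne') ((fun z => z - v) ⁻¹' S)
  have h3 : volume ((fun z => z - v) ⁻¹' S) = volume S := by
    simp only [sub_eq_add_neg]
    exact measure_preimage_add_right _ _ _
  rw [h1, h3, hdet, EuclideanSpace.volume_ball_fin_three, abs_of_pos (inv_pos.2 ha0)] at h2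
  rw [ENNReal.ofReal_mul ha0.le]
  simp only [ENNReal.ofReal_one, one_pow, one_mul] at h2
  rw [h2, ← mul_assoc, ← ENNReal.ofReal_mul ha0.le, mul_inv_cancel₀ ha0.ne']
  simp

lemma vkg_polar (v : EuclideanSpace ℝ (Fin 3)) (a : ℝ) (hva : ‖v‖ < a) :
    volume {x : EuclideanSpace ℝ (Fin 3) | a * ‖x‖ + ⟪x, v⟫ < 1}
      = ∫⁻ ω : Metric.sphere (0 : EuclideanSpace ℝ (Fin 3)) 1,
        ENNReal.ofReal (((a + ⟪(ω : EuclideanSpace ℝ (Fin 3)), v⟫) ^ 3)⁻¹ / 3)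
      ∂((volume : Measure (EuclideanSpace ℝ (Fin 3))).toSphere) := by
  set S := {x : EuclideanSpace ℝ (Fin 3) | a * ‖x‖ + ⟪x, v⟫ < 1} with hS
  have hSm : MeasurableSet S := by
    apply IsOpen.measurableSet
    exact isOpen_lt (by fun_prop) (by fun_prop)
  let T : Set (Metric.sphere (0 : EuclideanSpace ℝ (Fin 3)) 1 × Set.Ioi (0 : ℝ)) :=
    {p | p.2.1 * (a + ⟪(p.1 : EuclideanSpace ℝ (Fin 3)), v⟫) < 1}
  have hT : MeasurableSet T := by
    apply IsOpen.measurableSet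
    exact isOpen_lt (by fun_prop) (by fun_prop)
  have hmp := (volume : Measure (EuclideanSpace ℝ (Fin 3))).measurePreserving_homeomorphUnitSphereProd
  have h1 := hmp.measure_preimage hT.nullMeasurableSet
  have h2 : (homeomorphUnitSphereProd (EuclideanSpace ℝ (Fin 3))) ⁻¹' T = Subtype.val ⁻¹' S := by
    ext x
    have hx : ‖x.1‖ ≠ 0 := norm_ne_zero_iff.2 x.2
    simp only [T, hS, Set.mem_preimage, Set.mem_setOf_eq, homeomorphUnitSphereProd_apply_snd_coe,
      homeomorphUnitSphereProd_apply_fst_coe, inner_smul_left, conj_trivial]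
    rw [mul_add, mul_inv_cancel_left₀ hx, mul_comm]
  rw [h2, comap_subtype_coe_apply (measurableSet_singleton _).compl,
    Subtype.image_preimage_coe, Measure.prod_apply hT] at h1
  have h3 : volume (({0}ᶜ : Set (EuclideanSpace ℝ (Fin 3))) ∩ S) = volume S := by
    rw [Set.inter_comm, ← Set.sdiff_eq, measure_diff_null (by simp)]
  rw [← h3, h1]
  refine lintegral_congr fun ω => ?_
  have hω : 0 < a + ⟪(ω : EuclideanSpace ℝ (Fin 3)), v⟫ := by
    have := abs_le.1 (abs_real_inner_le_norm (ω : EuclideanSpace ℝ (Fin 3)) v)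
    have h1 : ‖(ω : EuclideanSpace ℝ (Fin 3))‖ = 1 := by simp
    rw [h1, one_mul] at this
    linarith [this.1]
  have h4 : Prod.mk ω ⁻¹' T
      = Set.Iio (⟨(a + ⟪(ω : EuclideanSpace ℝ (Fin 3)), v⟫)⁻¹, inv_pos.2 hω⟩ : Set.Ioi (0 : ℝ)) := by
    ext r
    simp only [T, Set.mem_preimage, Set.mem_setOf_eq, Set.mem_Iio, ← Subtype.coe_lt_coe]
    rw [lt_inv_comm₀ r.2 hω, ← one_div, lt_div_iff₀ r.2, mul_comm]
  rw [h4, Measure.volumeIoiPow_apply_Iio]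
  simp only [finrank_euclideanSpace, Fintype.card_fin]
  norm_num

/-- For fixed `v ∈ ℝ³`, the integral over the unit sphere of
`(√(1+|v|²)+ω·v)⁻³` equals `4π√(1+|v|²)`. -/
theorem vkg_sphere_integral_cube (v : EuclideanSpace ℝ (Fin 3)) :
    ∫ ω : Metric.sphere (0 : EuclideanSpace ℝ (Fin 3)) 1,
        ((Real.sqrt (1 + ‖v‖ ^ 2) + ⟪(ω : EuclideanSpace ℝ (Fin 3)), v⟫) ^ 3)⁻¹
      ∂((volume : Measure (EuclideanSpace ℝ (Fin 3))).toSphere)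
    = 4 * π * Real.sqrt (1 + ‖v‖ ^ 2) := by
  have ha : Real.sqrt (1 + ‖v‖ ^ 2) ^ 2 = 1 + ‖v‖ ^ 2 := Real.sq_sqrt (by positivity)
  have ha0 : 0 < Real.sqrt (1 + ‖v‖ ^ 2) := by positivity
  generalize Real.sqrt (1 + ‖v‖ ^ 2) = a at *
  have hva : ‖v‖ < a := by nlinarith [norm_nonneg v]
  have h := (vkg_polar v a hva).symm.trans (vkg_volume v a ha ha0)
  have h3 : ∫ ω : Metric.sphere (0 : EuclideanSpace ℝ (Fin 3)) 1,
        ((a + ⟪(ω : EuclideanSpace ℝ (Fin 3)), v⟫) ^ 3)⁻¹ / 3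
      ∂((volume : Measure (EuclideanSpace ℝ (Fin 3))).toSphere) = a * (π * 4 / 3) := by
    rw [integral_eq_lintegral_of_nonneg_ae, h, ENNReal.toReal_ofReal (by positivity)]
    · refine Filter.Eventually.of_forall fun ω => ?_
      have hω : 0 < a + ⟪(ω : EuclideanSpace ℝ (Fin 3)), v⟫ := by
        have := abs_le.1 (abs_real_inner_le_norm (ω : EuclideanSpace ℝ (Fin 3)) v)
        have h1 : ‖(ω : EuclideanSpace ℝ (Fin 3))‖ = 1 := by simp
        rw [h1, one_mul] at this
        linarith [this.1]
      simp only [Pi.zero_apply]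
      positivity
    · apply Measurable.aestronglyMeasurable
      have : Measurable fun ω : Metric.sphere (0 : EuclideanSpace ℝ (Fin 3)) 1 =>
          ⟪(ω : EuclideanSpace ℝ (Fin 3)), v⟫ := by
        apply Continuous.measurable
        fun_prop
      fun_prop
  rw [integral_div] at h3
  linarith
end

section
/- Define for v ∈ ℝ³ with v̂ = v/√(1+|v|²), unit vector ω and 1 ≤ k, ℓ ≤ 3 the kernel a^{kℓ}(ω,v̂) = -3(ω_ℓ v̂_k + ω_k v̂_ℓ)/((1+|v|²)(1+ω·v̂)³) - 3 ω_k ω_ℓ /((1+|v|²)²(1+ω·v̂)⁴) - 2 v̂_k v̂_ℓ /(1+ω·v̂)² + δ_{kℓ}/((1+|v|²)(1+ω·v̂)²). Then ∫_{|ω|=1} a^{kℓ}(ω,v̂) dω = 0. -/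
open MeasureTheory Real
open scoped RealInnerProductSpace

/-- The relativistic velocity `v̂ = v/√(1+|v|²)`. -/
noncomputable def vhat (v : EuclideanSpace ℝ (Fin 3)) : EuclideanSpace ℝ (Fin 3) :=
  (Real.sqrt (1 + ‖v‖ ^ 2))⁻¹ • v

/-- The kernel `a^{kℓ}(ω,v̂)` appearing in the representation of `∂_k∂_ℓ u`. -/
noncomputable def aklKernel (k l : Fin 3) (ω v : EuclideanSpace ℝ (Fin 3)) : ℝ :=
  -3 * (ω l * vhat v k + ω k * vhat v l) / ((1 + ‖v‖ ^ 2) * (1 + ⟪ω, vhat v⟫) ^ 3)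
  - 3 * (ω k * ω l) / ((1 + ‖v‖ ^ 2) ^ 2 * (1 + ⟪ω, vhat v⟫) ^ 4)
  - 2 * (vhat v k * vhat v l) / (1 + ⟪ω, vhat v⟫) ^ 2
  + (if k = l then (1 : ℝ) else 0) / ((1 + ‖v‖ ^ 2) * (1 + ⟪ω, vhat v⟫) ^ 2)

namespace AklAux

abbrev E3 := EuclideanSpace ℝ (Fin 3)
abbrev S2 := Metric.sphere (0 : E3) 1

noncomputable abbrev sig : Measure S2 := (volume : Measure E3).toSphere

lemma integrable_of_cont {f : S2 → ℝ} (hf : Continuous f) : Integrable f sig :=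
  hf.integrable_of_hasCompactSupport (HasCompactSupport.of_compactSpace f)

lemma inner_lb (ω : S2) (u : E3) {c : ℝ} (hu : ‖u‖ < 1 - c) : c < 1 + ⟪(ω : E3), u⟫ := by
  have h := abs_real_inner_le_norm (ω : E3) u
  have h1 : ‖(ω : E3)‖ = 1 := by simp
  rw [h1, one_mul] at h
  have := (abs_le.1 h).1
  linarith

lemma inner_pos (ω : S2) (u : E3) (hu : ‖u‖ < 1) : 0 < 1 + ⟪(ω : E3), u⟫ :=
  inner_lb ω u (by simpa using hu)

lemma cont_ker {g : S2 → ℝ} (hg : Continuous g) (u : E3) (hu : ‖u‖ < 1) (n : ℕ) :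
    Continuous (fun ω : S2 => g ω * ((1 + ⟪(ω : E3), u⟫) ^ n)⁻¹) := by
  refine hg.mul (Continuous.inv₀ (by fun_prop) fun ω => ?_)
  exact (pow_pos (inner_pos ω u hu) n).ne'

lemma deriv_lemma {g : S2 → ℝ} (hg : Continuous g) (u e : E3) (t₀ : ℝ)
    (hu : ‖u + t₀ • e‖ < 1) (n : ℕ) :
    HasDerivAt (fun t : ℝ => ∫ ω : S2, g ω * ((1 + ⟪(ω : E3), u + t • e⟫) ^ n)⁻¹ ∂sig)
      (∫ ω : S2, (-(n : ℝ)) *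
        (g ω * ⟪(ω : E3), e⟫ * ((1 + ⟪(ω : E3), u + t₀ • e⟫) ^ (n + 1))⁻¹) ∂sig) t₀ := by
  set δ : ℝ := (1 - ‖u + t₀ • e‖) / 2 with hδ
  have hδ0 : 0 < δ := by rw [hδ]; linarith
  have hop : IsOpen {t : ℝ | ‖u + t • e‖ < 1 - δ} :=
    isOpen_lt (by fun_prop) continuous_const
  have hs : {t : ℝ | ‖u + t • e‖ < 1 - δ} ∈ nhds t₀ :=
    hop.mem_nhds (by simp only [Set.mem_ofPred_eq]; linarith)
  have hgi : Continuous (fun ω : S2 => g ω * ⟪(ω : E3), e⟫) := by fun_prop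
  refine (hasDerivAt_integral_of_dominated_loc_of_deriv_le
    (F := fun (t : ℝ) (ω : S2) => g ω * ((1 + ⟪(ω : E3), u + t • e⟫) ^ n)⁻¹)
    (F' := fun (t : ℝ) (ω : S2) => (-(n : ℝ)) *
        (g ω * ⟪(ω : E3), e⟫ * ((1 + ⟪(ω : E3), u + t • e⟫) ^ (n + 1))⁻¹))
    (bound := fun ω => (n : ℝ) * (|g ω * ⟪(ω : E3), e⟫| * (δ ^ (n + 1))⁻¹))
    hs ?_ ?_ ?_ ?_ ?_ ?_).2
  · filter_upwards [hs] with t ht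
    exact (cont_ker hg _ (lt_trans ht (by linarith)) n).aestronglyMeasurable
  · exact integrable_of_cont (cont_ker hg _ hu n)
  · exact (continuous_const.mul (cont_ker hgi _ hu (n+1))).aestronglyMeasurable
  · refine Filter.Eventually.of_forall fun ω t ht => ?_
    have hlb := inner_lb ω _ ht
    have hp : 0 < 1 + ⟪(ω : E3), u + t • e⟫ := hδ0.trans hlb
    rw [norm_mul, norm_neg, norm_mul, Real.norm_natCast, Real.norm_eq_abs, norm_inv, norm_pow,
      Real.norm_eq_abs, abs_of_pos hp]
    gcongr
  · exact integrable_of_cont (by fun_prop)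
  · refine Filter.Eventually.of_forall fun ω t ht => ?_
    have hlb := inner_lb ω _ ht
    have hp : 0 < 1 + ⟪(ω : E3), u + t • e⟫ := hδ0.trans hlb
    have h1 : HasDerivAt (fun t : ℝ => 1 + ⟪(ω : E3), u + t • e⟫) ⟪(ω : E3), e⟫ t := by
      have : (fun t : ℝ => 1 + ⟪(ω : E3), u + t • e⟫)
          = fun t : ℝ => (1 + ⟪(ω : E3), u⟫) + t * ⟪(ω : E3), e⟫ := by
        funext t; rw [inner_add_right, inner_smul_right]; ring
      rw [this]
      simpa using ((hasDerivAt_id t).mul_const ⟪(ω : E3), e⟫).const_add (1 + ⟪(ω : E3), u⟫)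
    have h2 := ((h1.pow n).inv (pow_pos hp n).ne').const_mul (g ω)
    refine h2.congr_deriv ?_
    rcases n with _ | n
    · simp
    · simp only [Pi.pow_apply, Nat.add_sub_cancel]
      field_simp
      ring

/-- volume of the ellipsoid -/
lemma vol_ell (u : E3) (hu : ‖u‖ < 1) :
    (volume : Measure E3) {x : E3 | ‖x‖ + ⟪x, u⟫ < 1} =
      ENNReal.ofReal (((1 - ‖u‖ ^ 2) ^ 2)⁻¹) * volume (Metric.ball (0 : E3) 1) := by
  set s : ℝ := 1 - ‖u‖ ^ 2 with hs
  have hs0 : 0 < s := by have := norm_nonneg u; rw [hs]; nlinarith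
  obtain ⟨q, hq0, hq⟩ : ∃ q : ℝ, 0 < q ∧ q ^ 2 = s := ⟨√s, Real.sqrt_pos.2 hs0, Real.sq_sqrt hs0.le⟩
  have hr : ‖u‖ ^ 2 = 1 - q ^ 2 := by rw [hq, hs]; ring
  set L : E3 →ₗ[ℝ] E3 :=
    q • LinearMap.transvection ((-(1 + q)⁻¹) • (innerₛₗ ℝ u)) u with hL
  have hLx : ∀ x, L x = q • (x + (-(1 + q)⁻¹ * ⟪u, x⟫) • u) := by
    intro x; simp [hL, LinearMap.transvection.apply]
  have hdet : LinearMap.det L = q ^ 4 := by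
    rw [hL, LinearMap.det_smul, LinearMap.transvection.det]
    simp only [LinearMap.smul_apply, innerₛₗ_apply_apply, real_inner_self_eq_norm_sq, hr, smul_eq_mul]
    simp
    field_simp
    ring
  have hE : {x : E3 | ‖x‖ + ⟪x, u⟫ < 1} = L ⁻¹' (Metric.ball (-u) 1) := by
    ext x
    have key : ‖L x + u‖ ^ 2 = 1 - q ^ 2 * ((1 - ⟪x, u⟫) ^ 2 - ‖x‖ ^ 2) := by
      rw [hLx, ← real_inner_self_eq_norm_sq]
      simp only [inner_add_left, inner_add_right, inner_smul_left, inner_smul_right,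
        real_inner_self_eq_norm_sq, real_inner_comm, hr, conj_trivial, smul_add]
      simp only [real_inner_comm x u, hr]
      field_simp
      ring
    have cs := abs_real_inner_le_norm x u
    have hxu : |⟪x, u⟫| ≤ ‖x‖ := cs.trans (mul_le_of_le_one_right (norm_nonneg _) hu.le)
    have h3 := abs_le.1 hxu
    have hn := norm_nonneg x
    simp only [Set.mem_ofPred_eq, Set.mem_preimage, Metric.mem_ball, dist_eq_norm, sub_neg_eq_add]
    rw [← sq_lt_one_iff₀ (norm_nonneg _), key]
    have hq2 : 0 < q ^ 2 := by positivity
    constructor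
    · intro h
      have : 0 < (1 - ⟪x, u⟫) ^ 2 - ‖x‖ ^ 2 := by nlinarith
      nlinarith [mul_pos hq2 this]
    · intro h
      have h4 : 0 < (1 - ⟪x, u⟫) ^ 2 - ‖x‖ ^ 2 := by
        by_contra hc
        push Not at hc
        nlinarith [mul_nonneg hq2.le (sub_nonneg.2 hc)]
      have h5 : 0 < (1 - ⟪x, u⟫ - ‖x‖) * (1 - ⟪x, u⟫ + ‖x‖) := by nlinarith
      have h6 : 0 < 1 - ⟪x, u⟫ + ‖x‖ ∨ 1 - ⟪x, u⟫ + ‖x‖ ≤ 0 := lt_or_ge _ _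
      rcases h6 with h6 | h6
      · have := (pos_iff_pos_of_mul_pos h5).2 h6
        linarith
      · linarith
  rw [hE, Measure.addHaar_preimage_linearMap _ (by rw [hdet]; positivity), hdet,
    abs_of_pos (by positivity), Measure.addHaar_ball_center, ← hq, ← pow_mul]

lemma J3 (u : E3) (hu : ‖u‖ < 1) :
    ∫ ω : S2, ((1 + ⟪(ω : E3), u⟫) ^ 3)⁻¹ ∂sig = sig.real Set.univ * ((1 - ‖u‖ ^ 2) ^ 2)⁻¹ := by
  have hc : Continuous (fun ω : S2 => ((1 + ⟪(ω : E3), u⟫) ^ 3)⁻¹) := by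
    simpa using cont_ker (g := fun _ => 1) continuous_const u hu 3
  have hopen : IsOpen {x : E3 | ‖x‖ + ⟪x, u⟫ < 1} := isOpen_lt (by fun_prop) continuous_const
  have mp := (volume : Measure E3).measurePreserving_homeomorphUnitSphereProd
  have h1 : (volume : Measure E3) {x : E3 | ‖x‖ + ⟪x, u⟫ < 1} =
      ∫⁻ ω : S2, ENNReal.ofReal (((1 + ⟪(ω : E3), u⟫) ^ 3)⁻¹ / 3) ∂sig := by
    set T : Set (S2 × Set.Ioi (0:ℝ)) := {p | p.2.1 * (1 + ⟪(p.1 : E3), u⟫) < 1} with hT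
    have hTm : MeasurableSet T := (isOpen_lt (by fun_prop) continuous_const).measurableSet
    have e1 : (homeomorphUnitSphereProd E3) ⁻¹' T = Subtype.val ⁻¹' {x : E3 | ‖x‖ + ⟪x, u⟫ < 1} := by
      ext x
      have hx : ‖(x : E3)‖ ≠ 0 := norm_ne_zero_iff.2 x.2
      simp only [hT, Set.mem_preimage, Set.mem_ofPred_eq, homeomorphUnitSphereProd_apply_snd_coe,
        homeomorphUnitSphereProd_apply_fst_coe, inner_smul_left, conj_trivial]
      rw [mul_add, mul_one, mul_inv_cancel_left₀ hx]
    have e2 := mp.measure_preimage hTm.nullMeasurableSet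
    rw [e1, comap_subtype_coe_apply (measurableSet_singleton _).compl,
      Subtype.image_preimage_coe, Measure.prod_apply hTm] at e2
    have e3 : (volume : Measure E3) ({0}ᶜ ∩ {x : E3 | ‖x‖ + ⟪x, u⟫ < 1}) =
        volume {x : E3 | ‖x‖ + ⟪x, u⟫ < 1} := by
      rw [Set.inter_comm, ← Set.sdiff_eq, measure_sdiff_null (measure_singleton _)]
    rw [← e3, e2]
    refine lintegral_congr fun ω => ?_
    have hp := inner_pos ω u hu
    have e4 : Prod.mk ω ⁻¹' T = Set.Iio (⟨(1 + ⟪(ω : E3), u⟫)⁻¹, inv_pos.2 hp⟩ : Set.Ioi (0:ℝ)) := by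
      ext r
      simp only [hT, Set.mem_preimage, Set.mem_ofPred_eq, Set.mem_Iio, ← Subtype.coe_lt_coe]
      rw [← lt_div_iff₀ hp, one_div]
    rw [e4, Measure.volumeIoiPow_apply_Iio]
    simp
    norm_num
  have h2 : ∫ ω : S2, ((1 + ⟪(ω : E3), u⟫) ^ 3)⁻¹ / 3 ∂sig =
      ((volume : Measure E3) {x : E3 | ‖x‖ + ⟪x, u⟫ < 1}).toReal := by
    rw [h1, integral_eq_lintegral_of_nonneg_ae]
    · exact Filter.Eventually.of_forall fun ω => by
        have := inner_pos ω u hu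
        simp only [Pi.zero_apply]; positivity
    · exact (hc.div_const 3).aestronglyMeasurable
  rw [integral_div, vol_ell u hu, ENNReal.toReal_mul, ENNReal.toReal_ofReal (by positivity)] at h2
  rw [Measure.toSphere_real_apply_univ]
  simp only [finrank_euclideanSpace, Fintype.card_fin, Measure.real]
  push_cast
  linarith

lemma J2 (u : E3) (hu : ‖u‖ < 1) :
    ∫ ω : S2, ((1 + ⟪(ω : E3), u⟫) ^ 2)⁻¹ ∂sig = sig.real Set.univ * (1 - ‖u‖ ^ 2)⁻¹ := by
  set C := sig.real Set.univ with hC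
  have htu : ∀ t ∈ Set.Icc (0:ℝ) 1, ‖t • u‖ < 1 := fun t ht => by
    rw [norm_smul, Real.norm_of_nonneg ht.1]
    nlinarith [norm_nonneg u, ht.1, ht.2]
  set f : ℝ → ℝ := fun t => t ^ 2 * (∫ ω : S2, 1 * ((1 + ⟪(ω : E3), 0 + t • u⟫) ^ 2)⁻¹ ∂sig)
    - C * (t ^ 2 / (1 - t ^ 2 * ‖u‖ ^ 2)) with hf
  have hd : ∀ t ∈ Set.Icc (0:ℝ) 1, HasDerivAt f 0 t := by
    intro t ht
    have hlt := htu t ht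
    have hpos : 0 < 1 - t ^ 2 * ‖u‖ ^ 2 := by
      have := norm_nonneg (t • u)
      have h2 : ‖t • u‖ ^ 2 = t ^ 2 * ‖u‖ ^ 2 := by rw [norm_smul, mul_pow, Real.norm_eq_abs, sq_abs]
      nlinarith
    have d1 := deriv_lemma (g := fun _ => (1:ℝ)) continuous_const 0 u t (by simpa using hlt) 2
    have d2 := (hasDerivAt_pow 2 t).mul d1
    have d3 : HasDerivAt (fun t : ℝ => 1 - t ^ 2 * ‖u‖ ^ 2) (-(2 * t * ‖u‖ ^ 2)) t := by
      simpa using ((hasDerivAt_pow 2 t).mul_const (‖u‖ ^ 2)).const_sub 1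
    have d4 := ((hasDerivAt_pow 2 t).div d3 hpos.ne').const_mul C
    refine (d2.sub d4).congr_deriv ?_
    have key : 2 * t * (∫ ω : S2, 1 * ((1 + ⟪(ω : E3), 0 + t • u⟫) ^ 2)⁻¹ ∂sig) +
        t ^ 2 * (∫ ω : S2, (-((2:ℕ) : ℝ)) *
          (1 * ⟪(ω : E3), u⟫ * ((1 + ⟪(ω : E3), 0 + t • u⟫) ^ (2 + 1))⁻¹) ∂sig)
        = 2 * t * (C * ((1 - ‖t • u‖ ^ 2) ^ 2)⁻¹) := by
      rw [← J3 _ hlt, ← integral_const_mul, ← integral_const_mul, ← integral_const_mul, ← integral_add]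
      · refine integral_congr_ae (Filter.Eventually.of_forall fun ω => ?_)
        have hp := inner_pos ω _ hlt
        simp only [zero_add, one_mul, inner_smul_right] at hp ⊢
        push_cast
        field_simp
        ring
      · exact (integrable_of_cont (cont_ker continuous_const _ (by simpa using hlt) 2)).const_mul _
      · exact ((integrable_of_cont (cont_ker (g := fun ω : S2 => 1 * ⟪(ω : E3), u⟫) (by fun_prop) _
          (by simpa using hlt) 3)).const_mul _).const_mul _
    have h2 : ‖t • u‖ ^ 2 = t ^ 2 * ‖u‖ ^ 2 := by rw [norm_smul, mul_pow, Real.norm_eq_abs, sq_abs]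
    rw [h2] at key
    norm_num at key ⊢
    rw [key]
    field_simp
    ring
  have hcst := constant_of_has_deriv_right_zero (f := f) (a := 0) (b := 1)
    (fun t ht => (hd t ht).continuousAt.continuousWithinAt)
    (fun t ht => (hd t ⟨ht.1, ht.2.le⟩).hasDerivWithinAt) 1 (by simp)
  simp only [hf] at hcst
  norm_num at hcst
  rw [← sub_eq_zero, ← hcst]

lemma hasDeriv_nsq (u e : E3) :
    HasDerivAt (fun t : ℝ => 1 - ‖u + t • e‖ ^ 2) (-(2 * ⟪u, e⟫)) 0 := by
  have : (fun t : ℝ => 1 - ‖u + t • e‖ ^ 2) =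
      fun t : ℝ => 1 - (‖u‖ ^ 2 + t * (2 * ⟪u, e⟫) + t ^ 2 * ‖e‖ ^ 2) := by
    funext t
    rw [norm_add_sq_real, norm_smul, inner_smul_right, mul_pow, Real.norm_eq_abs, sq_abs]; ring
  rw [this]
  have a1 := (hasDerivAt_id (0:ℝ)).mul_const (2 * ⟪u, e⟫)
  have a2 := (hasDerivAt_pow 2 (0:ℝ)).mul_const (‖e‖ ^ 2)
  simpa using ((a1.const_add (‖u‖ ^ 2)).add a2).const_sub 1

lemma near (u e : E3) (hu : ‖u‖ < 1) : ∀ᶠ t : ℝ in nhds 0, ‖u + t • e‖ < 1 := by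
  have : IsOpen {t : ℝ | ‖u + t • e‖ < 1} := isOpen_lt (by fun_prop) continuous_const
  exact this.mem_nhds (by simpa using hu)

lemma spos (u : E3) (hu : ‖u‖ < 1) : 0 < 1 - ‖u‖ ^ 2 := by
  have := norm_nonneg u
  nlinarith

lemma J3k (u e : E3) (hu : ‖u‖ < 1) :
    ∫ ω : S2, ⟪(ω : E3), e⟫ * ((1 + ⟪(ω : E3), u⟫) ^ 3)⁻¹ ∂sig
      = - (sig.real Set.univ * (⟪u, e⟫ * ((1 - ‖u‖ ^ 2) ^ 2)⁻¹)) := by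
  have hs := spos u hu
  have d1 := deriv_lemma (g := fun _ => (1:ℝ)) continuous_const u e 0 (by simpa using hu) 2
  have d2 : HasDerivAt (fun t : ℝ => sig.real Set.univ * (1 - ‖u + t • e‖ ^ 2)⁻¹) _ 0 :=
    ((hasDeriv_nsq u e).inv (by simpa using hs.ne')).const_mul (sig.real Set.univ)
  have d3 := d2.congr_of_eventuallyEq (f₁ :=
    fun t : ℝ => ∫ ω : S2, 1 * ((1 + ⟪(ω : E3), u + t • e⟫) ^ 2)⁻¹ ∂sig) (by
      filter_upwards [near u e hu] with t ht
      simpa using J2 _ ht)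
  have := d1.unique d3
  rw [integral_const_mul] at this
  simp only [one_mul, zero_smul, add_zero, neg_neg] at this
  have h3 : ∀ I X : ℝ, (-((2:ℕ):ℝ)) * I = X → I = -X / 2 := by
    intro I X h; push_cast at h; linarith
  rw [h3 _ _ this]
  field_simp

lemma J4kl (u e f : E3) (hu : ‖u‖ < 1) :
    ∫ ω : S2, ⟪(ω : E3), e⟫ * ⟪(ω : E3), f⟫ * ((1 + ⟪(ω : E3), u⟫) ^ 4)⁻¹ ∂sig
      = sig.real Set.univ / 3 * (⟪e, f⟫ * ((1 - ‖u‖ ^ 2) ^ 2)⁻¹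
        + 4 * ⟪u, e⟫ * ⟪u, f⟫ * ((1 - ‖u‖ ^ 2) ^ 3)⁻¹) := by
  have hs := spos u hu
  have d1 := deriv_lemma (g := fun ω : S2 => ⟪(ω : E3), e⟫) (by fun_prop) u f 0
    (by simpa using hu) 3
  have di : HasDerivAt (fun t : ℝ => ⟪u + t • f, e⟫) ⟪f, e⟫ 0 := by
    have : (fun t : ℝ => ⟪u + t • f, e⟫) = fun t : ℝ => ⟪u, e⟫ + t * ⟪f, e⟫ := by
      funext t; rw [inner_add_left, inner_smul_left]; simp
    rw [this]
    simpa using ((hasDerivAt_id (0:ℝ)).mul_const ⟪f, e⟫).const_add ⟪u, e⟫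
  have d2 : HasDerivAt (fun t : ℝ => -(sig.real Set.univ *
      (⟪u + t • f, e⟫ * ((1 - ‖u + t • f‖ ^ 2) ^ 2)⁻¹))) _ 0 :=
    ((di.mul (((hasDeriv_nsq u f).pow 2).inv (by simpa using hs.ne'))).const_mul
      (sig.real Set.univ)).neg
  have d3 := d2.congr_of_eventuallyEq (f₁ :=
    fun t : ℝ => ∫ ω : S2, ⟪(ω : E3), e⟫ * ((1 + ⟪(ω : E3), u + t • f⟫) ^ 3)⁻¹ ∂sig) (by
      filter_upwards [near u f hu] with t ht
      exact J3k _ _ ht)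
  have := d1.unique d3
  rw [integral_const_mul] at this
  simp only [Pi.pow_apply, Pi.inv_apply, zero_smul, add_zero, real_inner_comm e f] at this
  have h3 : ∀ I X : ℝ, (-((3:ℕ):ℝ)) * I = X → I = -X / 3 := by
    intro I X h; push_cast at h; linarith
  rw [h3 _ _ this]
  norm_num
  field_simp
  ring

end AklAux

/-- The averaging property of the kernel `a^{kℓ}`: its integral over the unit sphere
vanishes for every `v ∈ ℝ³` and all `1 ≤ k, ℓ ≤ 3`. -/
theorem aklKernel_sphere_average_zero (k l : Fin 3) (v : EuclideanSpace ℝ (Fin 3)) :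
    ∫ ω : Metric.sphere (0 : EuclideanSpace ℝ (Fin 3)) 1,
        aklKernel k l (ω : EuclideanSpace ℝ (Fin 3)) v
      ∂((volume : Measure (EuclideanSpace ℝ (Fin 3))).toSphere)
    = 0 := by
  have hN : 0 < 1 + ‖v‖ ^ 2 := by positivity
  have hu2 : ‖vhat v‖ ^ 2 = 1 - (1 + ‖v‖ ^ 2)⁻¹ := by
    rw [vhat, norm_smul, mul_pow, norm_inv, inv_pow, Real.norm_eq_abs, sq_abs, Real.sq_sqrt hN.le]
    field_simp
    ring
  unfold aklKernel
  generalize vhat v = u at *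
  set N := 1 + ‖v‖ ^ 2 with hNdef
  have hs : 1 - ‖u‖ ^ 2 = N⁻¹ := by rw [hu2]; ring
  have hu : ‖u‖ < 1 := by
    have : 0 < N⁻¹ := inv_pos.2 hN
    by_contra hc
    push Not at hc
    nlinarith
  set ek : AklAux.E3 := EuclideanSpace.single k 1 with hek
  set el : AklAux.E3 := EuclideanSpace.single l 1 with hel
  have ck : ∀ x : AklAux.E3, ⟪x, ek⟫ = x k := fun x => by
    rw [hek, EuclideanSpace.inner_single_right]; simp
  have cl : ∀ x : AklAux.E3, ⟪x, el⟫ = x l := fun x => by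
    rw [hel, EuclideanSpace.inner_single_right]; simp
  have hkl : ⟪ek, el⟫ = if k = l then (1:ℝ) else 0 := by
    rw [cl, hek]; simp [eq_comm]
  have i2 := AklAux.J2 u hu
  have i3k := AklAux.J3k u ek hu
  have i3l := AklAux.J3k u el hu
  have i4 := AklAux.J4kl u ek el hu
  have n2 := AklAux.integrable_of_cont (AklAux.cont_ker (g := fun _ => (1:ℝ)) continuous_const u hu 2)
  have n3k := AklAux.integrable_of_cont (AklAux.cont_ker
    (g := fun ω => ⟪(ω : AklAux.E3), ek⟫) (by fun_prop) u hu 3)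
  have n3l := AklAux.integrable_of_cont (AklAux.cont_ker
    (g := fun ω => ⟪(ω : AklAux.E3), el⟫) (by fun_prop) u hu 3)
  have n4 := AklAux.integrable_of_cont (AklAux.cont_ker
    (g := fun ω => ⟪(ω : AklAux.E3), ek⟫ * ⟪(ω : AklAux.E3), el⟫) (by fun_prop) u hu 4)
  simp only [one_mul] at n2
  have hrew : ∀ ω : AklAux.S2,
      -3 * ((ω : AklAux.E3) l * u k + (ω : AklAux.E3) k * u l) / (N * (1 + ⟪(ω : AklAux.E3), u⟫) ^ 3)
      - 3 * ((ω : AklAux.E3) k * (ω : AklAux.E3) l) / (N ^ 2 * (1 + ⟪(ω : AklAux.E3), u⟫) ^ 4)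
      - 2 * (u k * u l) / (1 + ⟪(ω : AklAux.E3), u⟫) ^ 2
      + (if k = l then (1 : ℝ) else 0) / (N * (1 + ⟪(ω : AklAux.E3), u⟫) ^ 2)
      = (-3 * u k * N⁻¹) * (⟪(ω : AklAux.E3), el⟫ * ((1 + ⟪(ω : AklAux.E3), u⟫) ^ 3)⁻¹)
      + (-3 * u l * N⁻¹) * (⟪(ω : AklAux.E3), ek⟫ * ((1 + ⟪(ω : AklAux.E3), u⟫) ^ 3)⁻¹)
      + (-3 * (N ^ 2)⁻¹) * (⟪(ω : AklAux.E3), ek⟫ * ⟪(ω : AklAux.E3), el⟫ *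
          ((1 + ⟪(ω : AklAux.E3), u⟫) ^ 4)⁻¹)
      + (-2 * (u k * u l) + ⟪ek, el⟫ * N⁻¹) * ((1 + ⟪(ω : AklAux.E3), u⟫) ^ 2)⁻¹ := by
    intro ω
    have hp := AklAux.inner_pos ω u hu
    rw [hkl, ck, cl]
    generalize (if k = l then (1 : ℝ) else 0) = d
    field_simp
    ring
  rw [integral_congr_ae (Filter.Eventually.of_forall hrew)]
  rw [integral_add (((n3l.const_mul _).fun_add (n3k.const_mul _)).fun_add (n4.const_mul _)) (n2.const_mul _),
    integral_add ((n3l.const_mul _).fun_add (n3k.const_mul _)) (n4.const_mul _),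
    integral_add (n3l.const_mul _) (n3k.const_mul _), integral_const_mul, integral_const_mul,
    integral_const_mul, integral_const_mul, i2, i3k, i3l, i4, hs, ck, cl]
  field_simp
  ring
end

section
/- For v ∈ ℝ³ and 1 ≤ k, ℓ ≤ 3, the spherical integrals satisfy ∫_{|ω|=1} ω_k ω_ℓ dω/(√(1+|v|²)+ω·v)⁴ = (16π/3) v_k v_ℓ + (4π/3) δ_{kℓ}. -/
open MeasureTheory Real
open scoped RealInnerProductSpace

namespace VKG

abbrev E := EuclideanSpace ℝ (Fin 3)

lemma finrankE : Module.finrank ℝ E = 3 := by simp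

lemma polar (G : E → ℝ) (hG : Integrable G) :
    ∫ x, G x = ∫ ω : Metric.sphere (0 : E) 1, (∫ r in Set.Ioi (0:ℝ), r ^ 2 * G (r • (ω : E)))
      ∂((volume : Measure E).toSphere) := by
  have hmp := (volume : Measure E).measurePreserving_homeomorphUnitSphereProd
  rw [finrankE] at hmp
  have hemb := (homeomorphUnitSphereProd E).measurableEmbedding
  have hcomp : ∀ x : ({(0 : E)}ᶜ : Set E),
      (fun p : Metric.sphere (0 : E) 1 × Set.Ioi (0 : ℝ) => G ((p.2 : ℝ) • (p.1 : E)))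
        (homeomorphUnitSphereProd E x) = G x := by
    intro x
    have hx : ‖(x : E)‖ ≠ 0 := norm_ne_zero_iff.2 x.2
    simp [smul_smul, hx]
  have h1 : ∫ x, G x = ∫ x : ({(0 : E)}ᶜ : Set E), G x ∂(volume.comap Subtype.val) := by
    rw [integral_subtype_comap (measurableSet_singleton _).compl G,
      restrict_compl_singleton]
  have hint : Integrable (fun x : ({(0 : E)}ᶜ : Set E) => G x) (volume.comap Subtype.val) := by
    have h := hG.integrableOn (s := ({(0 : E)}ᶜ : Set E))
    exact (integrableOn_iff_comap_subtypeVal (measurableSet_singleton _).compl).1 h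
  have hint2 : Integrable
      (fun p : Metric.sphere (0 : E) 1 × Set.Ioi (0 : ℝ) => G ((p.2 : ℝ) • (p.1 : E)))
      ((volume : Measure E).toSphere.prod (Measure.volumeIoiPow (3 - 1))) := by
    rw [← hmp.integrable_comp_emb hemb]
    exact hint.congr (.of_forall fun x => (hcomp x).symm)
  rw [h1]
  calc _ = ∫ x : ({(0 : E)}ᶜ : Set E),
      (fun p : Metric.sphere (0 : E) 1 × Set.Ioi (0 : ℝ) => G ((p.2 : ℝ) • (p.1 : E)))
        (homeomorphUnitSphereProd E x) ∂(volume.comap Subtype.val) :=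
        integral_congr_ae (.of_forall fun x => (hcomp x).symm)
    _ = _ := by
      refine (hmp.integral_comp hemb (fun p : Metric.sphere (0 : E) 1 × Set.Ioi (0 : ℝ) =>
        G ((p.2 : ℝ) • (p.1 : E)))).trans ?_
      rw [integral_prod _ hint2]
      congr 1
      ext ω
      simp only [Measure.volumeIoiPow, ENNReal.ofReal]
      rw [integral_withDensity_eq_integral_smul,
        integral_subtype_comap measurableSet_Ioi
          fun a ↦ Real.toNNReal (a ^ (3 - 1)) • G (a • (ω : E)),
        setIntegral_congr_fun measurableSet_Ioi fun x hx ↦ ?_]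
      · simp only [NNReal.smul_def, smul_eq_mul]
        rw [Real.coe_toNNReal _ (pow_nonneg (le_of_lt hx) _)]
      · exact (measurable_subtype_coe.pow_const _).real_toNNReal

lemma radial (a : ℝ) (ha : 0 < a) :
    ∫ r in Set.Ioi (0:ℝ), r ^ 3 * rexp (-(a * r)) = 6 / a ^ 4 := by
  have h := integral_rpow_mul_exp_neg_mul_Ioi (a := 4) (r := a) (by norm_num) ha
  have hG : Real.Gamma 4 = 6 := by
    have := Real.Gamma_nat_eq_factorial 3
    rw [show ((3:ℕ):ℝ) + 1 = 4 by norm_num] at this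
    rw [this]; norm_num [Nat.factorial]
  rw [hG] at h
  have e : (4:ℝ) - 1 = (3:ℕ) := by norm_num
  rw [e] at h
  simp only [rpow_natCast] at h
  rw [h, show (4:ℝ) = (4:ℕ) by norm_num, rpow_natCast]
  field_simp

lemma radial_int (a : ℝ) (ha : 0 < a) :
    IntegrableOn (fun r : ℝ => r ^ 3 * rexp (-(a * r))) (Set.Ioi 0) := by
  apply Integrable.of_integral_ne_zero
  rw [radial a ha]; positivity

lemma cone (H q : E → ℝ) (hH : Continuous H) (hq : Continuous q)
    (hH2 : ∀ r : ℝ, 0 < r → ∀ x, H (r • x) = r ^ 2 * H x)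
    (hq1 : ∀ r : ℝ, 0 < r → ∀ x, q (r • x) = r * q x)
    (hpos : ∀ x, x ≠ 0 → 0 < q x) :
    ∫ x, H x / ‖x‖ * rexp (-q x) =
      6 * ∫ ω : Metric.sphere (0 : E) 1, H ω / (q ω) ^ 4 ∂((volume : Measure E).toSphere) := by
  have hK : IsCompact (Metric.sphere (0:E) 1) := isCompact_sphere _ _
  obtain ⟨A, hA⟩ := hK.exists_bound_of_continuousOn hH.continuousOn
  obtain ⟨x0, hx0, hmin⟩ := hK.exists_isMinOn
    (NormedSpace.sphere_nonempty.2 zero_le_one) hq.continuousOn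
  have hx00 : x0 ≠ 0 := by rintro rfl; simp at hx0
  set c := q x0
  have hc : 0 < c := hpos _ hx00
  have key : ∀ x : E, x ≠ 0 → |H x| ≤ A * ‖x‖ ^ 2 ∧ c * ‖x‖ ≤ q x := by
    intro x hx
    have hn : 0 < ‖x‖ := norm_pos_iff.2 hx
    have hs : ‖x‖⁻¹ • x ∈ Metric.sphere (0:E) 1 := by
      simp [norm_smul, hn.ne']
    have e : x = ‖x‖ • (‖x‖⁻¹ • x) := by simp [smul_smul, hn.ne']
    constructor
    · rw [e, hH2 _ hn, abs_mul, ← e, abs_of_pos (by positivity), mul_comm]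
      exact mul_le_mul_of_nonneg_right (hA _ hs) (by positivity)
    · have h3 : q x = ‖x‖ * q (‖x‖⁻¹ • x) := by rw [← hq1 _ hn, ← e]
      rw [h3, mul_comm]
      exact mul_le_mul_of_nonneg_left (hmin hs) hn.le
  have hint : Integrable (fun x => H x / ‖x‖ * rexp (-q x)) := by
    have hdom : Integrable (fun x : E => A * ‖x‖ * rexp (-(c * ‖x‖))) := by
      rw [integrable_fun_norm_addHaar (volume : Measure E)
        (f := fun r => A * r * rexp (-(c * r))), finrankE]
      refine ((radial_int c hc).const_mul A).congr (.of_forall fun r => ?_)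
      simp only [smul_eq_mul]; ring
    refine hdom.mono' ?_ ?_
    · exact ((hH.measurable.div measurable_norm).mul
        (hq.measurable.neg.exp)).aestronglyMeasurable
    · have : ∀ᵐ x : E, x ≠ 0 := by simp [ae_iff]
      filter_upwards [this] with x hx
      obtain ⟨k1, k2⟩ := key x hx
      have hn : 0 < ‖x‖ := norm_pos_iff.2 hx
      rw [Real.norm_eq_abs, abs_mul, abs_div, abs_norm, abs_of_pos (exp_pos _)]
      have : |H x| / ‖x‖ ≤ A * ‖x‖ := by
        rw [div_le_iff₀ hn]; nlinarith
      have h0 : 0 ≤ |H x| / ‖x‖ := by positivity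
      refine mul_le_mul this (exp_le_exp.2 (by linarith)) (exp_pos _).le (h0.trans this)
  rw [polar _ hint, ← integral_const_mul]
  congr 1
  ext ω
  have hω : ‖(ω : E)‖ = 1 := by simp
  have hω0 : (ω : E) ≠ 0 := by intro h; rw [h] at hω; simp at hω
  have hr := radial (q ω) (hpos _ hω0)
  rw [show 6 * (H ω / q ω ^ 4) = H ω * (6 / q ω ^ 4) by ring, ← hr, ← integral_const_mul]
  refine setIntegral_congr_fun measurableSet_Ioi fun r hr => ?_
  have hr : 0 < r := hr
  simp only [hH2 r hr, hq1 r hr, norm_smul, hω, Real.norm_eq_abs, abs_of_pos hr]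
  rw [mul_comm (q ω) r]
  field_simp

lemma cone1 (H : E → ℝ) (hH : Continuous H)
    (hH2 : ∀ r : ℝ, 0 < r → ∀ x, H (r • x) = r ^ 2 * H x) :
    ∫ x, H x / ‖x‖ * rexp (-‖x‖) =
      6 * ∫ ω : Metric.sphere (0 : E) 1, H ω ∂((volume : Measure E).toSphere) := by
  rw [cone H (fun x => ‖x‖) hH continuous_norm hH2
    (fun r hr x => by simp [norm_smul, abs_of_pos hr]) (fun x hx => norm_pos_iff.2 hx)]
  simp

lemma sphere_inv (R : E ≃ₗᵢ[ℝ] E) (H : E → ℝ) (hH : Continuous H)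
    (hH2 : ∀ r : ℝ, 0 < r → ∀ x, H (r • x) = r ^ 2 * H x) :
    ∫ ω : Metric.sphere (0 : E) 1, H (R ω) ∂((volume : Measure E).toSphere) =
    ∫ ω : Metric.sphere (0 : E) 1, H ω ∂((volume : Measure E).toSphere) := by
  have h1 := cone1 H hH hH2
  have h2 := cone1 (fun x => H (R x)) (hH.comp R.continuous)
    (fun r hr x => by simp [hH2 r hr])
  have h3 := R.measurePreserving.integral_comp R.toHomeomorph.measurableEmbedding
    (fun x => H x / ‖x‖ * rexp (-‖x‖))
  simp only [LinearIsometryEquiv.norm_map] at h3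
  linarith

lemma sphere_one : ∫ _ω : Metric.sphere (0 : E) 1, (1:ℝ) ∂((volume : Measure E).toSphere)
    = 4 * π := by
  rw [integral_const, smul_eq_mul, mul_one, Measure.toSphere_real_apply_univ, finrankE,
    Measure.real, InnerProductSpace.volume_ball_of_dim_odd (k := 1) (by simp)]
  norm_num [Nat.doubleFactorial]
  rw [ENNReal.toReal_ofReal (by positivity)]
  ring

lemma int_of_cont (H : E → ℝ) (hH : Continuous H) :
    Integrable (fun ω : Metric.sphere (0 : E) 1 => H ω) ((volume : Measure E).toSphere) := by
  have : CompactSpace (Metric.sphere (0:E) 1) := isCompact_iff_compactSpace.1 (isCompact_sphere _ _)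
  exact (hH.comp continuous_subtype_val).integrable_of_hasCompactSupport
    (HasCompactSupport.of_compactSpace _)

lemma sphere_lin (i : Fin 3) :
    ∫ ω : Metric.sphere (0 : E) 1, (ω : E) i ∂((volume : Measure E).toSphere) = 0 := by
  have h := sphere_inv (LinearIsometryEquiv.neg ℝ) (fun x => x i * ‖x‖) (by fun_prop)
    (fun r hr x => by simp [norm_smul, abs_of_pos hr]; ring)
  simp [integral_neg] at h
  linarith

lemma sphere_off (i j : Fin 3) (hij : i ≠ j) :
    ∫ ω : Metric.sphere (0 : E) 1, (ω : E) i * (ω : E) j ∂((volume : Measure E).toSphere) = 0 := by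
  have h := sphere_inv ((LinearIsometryEquiv.piLpCongrRight 2
      (fun m : Fin 3 => if m = i then LinearIsometryEquiv.neg ℝ else LinearIsometryEquiv.refl ℝ ℝ)))
    (fun x => x i * x j) (by fun_prop)
    (fun r hr x => by simp; ring)
  simp [hij.symm, integral_neg] at h
  linarith

lemma sphere_diag_eq (i j : Fin 3) :
    ∫ ω : Metric.sphere (0 : E) 1, (ω : E) i * (ω : E) i ∂((volume : Measure E).toSphere) =
    ∫ ω : Metric.sphere (0 : E) 1, (ω : E) j * (ω : E) j ∂((volume : Measure E).toSphere) := by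
  have h := sphere_inv (LinearIsometryEquiv.piLpCongrLeft 2 ℝ ℝ (Equiv.swap i j))
    (fun x => x j * x j) (by fun_prop)
    (fun r hr x => by simp; ring)
  simpa [LinearIsometryEquiv.piLpCongrLeft_apply, Equiv.piCongrLeft'] using h

lemma sphere_quad (i j : Fin 3) :
    ∫ ω : Metric.sphere (0 : E) 1, (ω : E) i * (ω : E) j ∂((volume : Measure E).toSphere) =
    4 * π / 3 * (if i = j then (1:ℝ) else 0) := by
  by_cases hij : i = j
  · subst hij
    have hsum : ∑ m : Fin 3, ∫ ω : Metric.sphere (0 : E) 1, (ω : E) m * (ω : E) m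
        ∂((volume : Measure E).toSphere) = 4 * π := by
      rw [← integral_finsetSum _ (fun m _ => int_of_cont (fun x => x m * x m) (by fun_prop)),
        ← sphere_one]
      congr 1
      ext ω
      have hω : ‖(ω : E)‖ = 1 := by simp
      have := EuclideanSpace.real_norm_sq_eq (ω : E)
      rw [hω] at this
      simp only [← sq]
      linarith
    simp only [sphere_diag_eq _ i] at hsum
    simp at hsum
    simp; linarith
  · simp [hij, sphere_off i j hij]

/-- The Lorentz boost acting on (the spatial part of) the light cone. -/
noncomputable def boost (v x : E) : E :=
  x + (‖x‖ + ⟪x, v⟫ / (1 + √(1 + ‖v‖ ^ 2))) • v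

lemma p_sq (v : E) : √(1 + ‖v‖ ^ 2) ^ 2 = 1 + ‖v‖ ^ 2 := Real.sq_sqrt (by positivity)

lemma q_pos (v x : E) (hx : x ≠ 0) : 0 < √(1 + ‖v‖ ^ 2) * ‖x‖ + ⟪x, v⟫ := by
  have hn : 0 < ‖x‖ := norm_pos_iff.2 hx
  have h1 := abs_real_inner_le_norm x v
  have h2 := neg_abs_le ⟪x, v⟫
  have h3 : ‖v‖ < √(1 + ‖v‖ ^ 2) := Real.lt_sqrt_of_sq_lt (by linarith)
  nlinarith

lemma boost_norm (v x : E) : ‖boost v x‖ = √(1 + ‖v‖ ^ 2) * ‖x‖ + ⟪x, v⟫ := by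
  have h0 : 0 ≤ √(1 + ‖v‖ ^ 2) * ‖x‖ + ⟪x, v⟫ := by
    by_cases hx : x = 0
    · simp [hx]
    · exact (q_pos v x hx).le
  rw [← sq_eq_sq₀ (norm_nonneg _) h0, boost, norm_add_sq_real, norm_smul, inner_smul_right,
    mul_pow, Real.norm_eq_abs, sq_abs]
  have hp := p_sq v
  have hp1 : 0 < 1 + √(1 + ‖v‖ ^ 2) := by positivity
  set p := √(1 + ‖v‖ ^ 2)
  have hv : ‖v‖ ^ 2 = (p - 1) * (1 + p) := by linarith
  rw [hv]
  field_simp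
  ring

lemma boost_inv (v x : E) : boost (-v) (boost v x) = x := by
  have hb : boost (-v) (boost v x) = boost v x +
      (‖boost v x‖ + ⟪boost v x, -v⟫ / (1 + √(1 + ‖v‖ ^ 2))) • (-v) := by
    rw [boost, norm_neg]
  rw [hb, boost_norm]
  simp only [boost, inner_add_left, inner_smul_left, inner_neg_right, real_inner_self_eq_norm_sq]
  have hp := p_sq v
  have hp1 : 0 < 1 + √(1 + ‖v‖ ^ 2) := by positivity
  set p := √(1 + ‖v‖ ^ 2)
  have hv : ‖v‖ ^ 2 = (p - 1) * (1 + p) := by linarith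
  rw [hv, smul_neg, add_assoc, ← sub_eq_add_neg, ← sub_smul]
  convert add_zero x
  convert zero_smul ℝ v
  simp only [conj_trivial]
  field_simp
  ring

lemma boost_inv' (v x : E) : boost v (boost (-v) x) = x := by
  simpa using boost_inv (-v) x

lemma boost_zero (v : E) : boost v 0 = 0 := by simp [boost]

lemma boost_smul (v x : E) (r : ℝ) (hr : 0 < r) : boost v (r • x) = r • boost v x := by
  simp only [boost, norm_smul, inner_smul_left, conj_trivial, Real.norm_eq_abs, abs_of_pos hr,
    smul_add, smul_smul]
  congr 2
  ring

lemma boost_cont (v : E) : Continuous (boost v) := by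
  unfold boost; fun_prop

/-- The differential of the boost. -/
noncomputable def dform (v x : E) : E →L[ℝ] ℝ :=
  ‖x‖⁻¹ • innerSL ℝ x + (1 + √(1 + ‖v‖ ^ 2))⁻¹ • innerSL ℝ v

noncomputable def dboost (v x : E) : E →L[ℝ] E :=
  ContinuousLinearMap.id ℝ E + (dform v x).smulRight v

lemma dboost_det (v x : E) (hx : x ≠ 0) :
    (dboost v x).det = (√(1 + ‖v‖ ^ 2) * ‖x‖ + ⟪x, v⟫) / ‖x‖ := by
  have hn : 0 < ‖x‖ := norm_pos_iff.2 hx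
  have h : ((dboost v x : E →L[ℝ] E) : E →ₗ[ℝ] E) =
      LinearMap.transvection ((dform v x : E →L[ℝ] ℝ) : E →ₗ[ℝ] ℝ) v := by
    ext y
    simp [dboost, LinearMap.transvection.apply]
  rw [ContinuousLinearMap.det, h, LinearMap.transvection.det]
  simp only [dform, ContinuousLinearMap.coe_coe, add_apply, smul_apply, innerSL_apply_apply,
    smul_eq_mul, real_inner_self_eq_norm_sq]
  have hp := p_sq v
  have hp1 : 0 < 1 + √(1 + ‖v‖ ^ 2) := by positivity
  set p := √(1 + ‖v‖ ^ 2)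
  have hv : ‖v‖ ^ 2 = (p - 1) * (1 + p) := by linarith
  rw [hv]
  field_simp
  ring

lemma hasFDerivAt_norm' (x : E) (hx : x ≠ 0) :
    HasFDerivAt (fun y : E => ‖y‖) (‖x‖⁻¹ • innerSL ℝ x) x := by
  have hn : 0 < ‖x‖ := norm_pos_iff.2 hx
  have h := (hasStrictFDerivAt_norm_sq x).hasFDerivAt.sqrt (by positivity)
  simp only [Real.sqrt_sq (norm_nonneg _)] at h
  have e : (1 / (2 * ‖x‖)) • 2 • innerSL ℝ x = ‖x‖⁻¹ • innerSL ℝ x := by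
    rw [two_smul, ← two_smul ℝ, smul_smul]
    congr 1
    field_simp
  rw [e] at h
  exact h

lemma boost_deriv (v x : E) (hx : x ≠ 0) : HasFDerivAt (boost v) (dboost v x) x := by
  have h1 := hasFDerivAt_norm' x hx
  have h2 : HasFDerivAt (fun y : E => ⟪y, v⟫ / (1 + √(1 + ‖v‖ ^ 2)))
      ((1 + √(1 + ‖v‖ ^ 2))⁻¹ • innerSL ℝ v) x := by
    have := (((1 + √(1 + ‖v‖ ^ 2))⁻¹ • innerSL ℝ v : E →L[ℝ] ℝ)).hasFDerivAt (x := x)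
    convert this using 1
    ext y
    simp [real_inner_comm, div_eq_inv_mul]
  exact (hasFDerivAt_id x).add ((h1.add h2).smul_const v)

lemma change (v : E) (g : E → ℝ) :
    ∫ y, g y = ∫ x, ((√(1 + ‖v‖ ^ 2) * ‖x‖ + ⟪x, v⟫) / ‖x‖) * g (boost v x) := by
  have him : boost v '' ({0}ᶜ) = {0}ᶜ := by
    ext y
    simp only [Set.mem_image, Set.mem_compl_iff, Set.mem_singleton_iff]
    constructor
    · rintro ⟨x, hx, rfl⟩ h
      apply hx
      rw [← boost_inv v x, h, boost_zero]
    · intro hy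
      refine ⟨boost (-v) y, fun h => hy ?_, boost_inv' v y⟩
      rw [← boost_inv' v y, h, boost_zero]
  have h := integral_image_eq_integral_abs_det_fderiv_smul (volume : Measure E)
    (s := {0}ᶜ) (f := boost v) (f' := dboost v) (measurableSet_singleton _).compl
    (fun x hx => (boost_deriv v x hx).hasFDerivWithinAt)
    (Function.LeftInverse.injective (boost_inv v)).injOn g
  rw [him, restrict_compl_singleton] at h
  rw [h]
  have : ∀ᵐ x : E, x ≠ 0 := by simp [ae_iff]
  refine integral_congr_ae ?_
  filter_upwards [this] with x hx
  have hn : 0 < ‖x‖ := norm_pos_iff.2 hx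
  rw [dboost_det v x hx, abs_of_pos (div_pos (q_pos v x hx) hn), smul_eq_mul]

lemma reduce (k l : Fin 3) (v : E) :
    ∫ ω : Metric.sphere (0 : E) 1, (ω : E) k * (ω : E) l
          / (√(1 + ‖v‖ ^ 2) + ⟪(ω : E), v⟫) ^ 4 ∂((volume : Measure E).toSphere)
    = ∫ ω : Metric.sphere (0 : E) 1, boost (-v) ω k * boost (-v) ω l
        ∂((volume : Measure E).toSphere) := by
  have hc := boost_cont (-v)
  have h1 := cone1 (fun y => boost (-v) y k * boost (-v) y l) (by fun_prop)
    (fun r hr x => by simp [boost_smul _ _ _ hr]; ring)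
  have h2 := cone (fun x => x k * x l) (fun x => √(1 + ‖v‖ ^ 2) * ‖x‖ + ⟪x, v⟫)
    (by fun_prop) (by fun_prop) (fun r hr x => by simp; ring)
    (fun r hr x => by
      simp only [norm_smul, inner_smul_left, conj_trivial, Real.norm_eq_abs, abs_of_pos hr]; ring)
    (q_pos v)
  rw [change v] at h1
  simp only [boost_inv, boost_norm] at h1
  have h3 : ∫ x : E, ((√(1 + ‖v‖ ^ 2) * ‖x‖ + ⟪x, v⟫) / ‖x‖) * (x k * x l /
      (√(1 + ‖v‖ ^ 2) * ‖x‖ + ⟪x, v⟫) * rexp (-(√(1 + ‖v‖ ^ 2) * ‖x‖ + ⟪x, v⟫)))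
      = ∫ x : E, x k * x l / ‖x‖ * rexp (-(√(1 + ‖v‖ ^ 2) * ‖x‖ + ⟪x, v⟫)) := by
    have : ∀ᵐ x : E, x ≠ 0 := by simp [ae_iff]
    refine integral_congr_ae ?_
    filter_upwards [this] with x hx
    have hn : 0 < ‖x‖ := norm_pos_iff.2 hx
    have := q_pos v x hx
    field_simp
  rw [h3, h2] at h1
  have h4 := mul_left_cancel₀ (by norm_num) h1
  rw [← h4]
  simp

lemma sphere_inner (k : Fin 3) (v : E) :
    ∫ ω : Metric.sphere (0 : E) 1, (ω : E) k * ⟪(ω : E), v⟫ ∂((volume : Measure E).toSphere)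
      = 4 * π / 3 * v k := by
  have e : ∀ ω : E, ω k * ⟪ω, v⟫ = ∑ m : Fin 3, v m * (ω k * ω m) := by
    intro ω
    rw [PiLp.inner_apply, Finset.mul_sum]
    refine Finset.sum_congr rfl fun m _ => ?_
    simp; ring
  simp only [e]
  rw [integral_finsetSum _ (fun m _ => int_of_cont (fun x => v m * (x k * x m)) (by fun_prop))]
  simp only [integral_const_mul, sphere_quad]
  simp
  ring

lemma sphere_inner1 (v : E) :
    ∫ ω : Metric.sphere (0 : E) 1, ⟪(ω : E), v⟫ ∂((volume : Measure E).toSphere) = 0 := by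
  have e : ∀ ω : E, ⟪ω, v⟫ = ∑ m : Fin 3, v m * ω m := by
    intro ω
    rw [PiLp.inner_apply]
    refine Finset.sum_congr rfl fun m _ => ?_
    simp
  simp only [e]
  rw [integral_finsetSum _ (fun m _ => int_of_cont (fun x => v m * x m) (by fun_prop))]
  simp only [integral_const_mul, sphere_lin]
  simp

lemma sphere_inner2 (v : E) :
    ∫ ω : Metric.sphere (0 : E) 1, ⟪(ω : E), v⟫ * ⟪(ω : E), v⟫ ∂((volume : Measure E).toSphere)
      = 4 * π / 3 * ‖v‖ ^ 2 := by
  have e : ∀ ω : E, ⟪ω, v⟫ * ⟪ω, v⟫ = ∑ m : Fin 3, v m * (ω m * ⟪ω, v⟫) := by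
    intro ω
    have e1 : ⟪ω, v⟫ = ∑ m : Fin 3, v m * ω m := by
      rw [PiLp.inner_apply]
      refine Finset.sum_congr rfl fun m _ => ?_
      simp
    generalize ⟪ω, v⟫ = t at e1 ⊢
    simp only [← mul_assoc]
    rw [← Finset.sum_mul, ← e1]
  simp only [e]
  rw [integral_finsetSum _ (fun m _ => int_of_cont (fun x => v m * (x m * ⟪x, v⟫)) (by fun_prop))]
  simp only [integral_const_mul, sphere_inner, EuclideanSpace.real_norm_sq_eq, Finset.mul_sum]
  refine Finset.sum_congr rfl fun m _ => ?_
  ring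

lemma final (k l : Fin 3) (v : E) :
    ∫ ω : Metric.sphere (0 : E) 1, boost (-v) ω k * boost (-v) ω l
        ∂((volume : Measure E).toSphere)
      = (16 * π / 3) * v k * v l + (4 * π / 3) * (if k = l then (1 : ℝ) else 0) := by
  have hp := p_sq v
  have hp1 : 0 < 1 + √(1 + ‖v‖ ^ 2) := by positivity
  set p := √(1 + ‖v‖ ^ 2) with hpdef
  have hv : ‖v‖ ^ 2 = (p - 1) * (1 + p) := by linarith
  have e : ∀ ω : Metric.sphere (0 : E) 1, boost (-v) ω k * boost (-v) ω l =
      (ω : E) k * (ω : E) l + ((-v l) * (ω : E) k + ((-v k) * (ω : E) l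
      + ((v l / (1 + p)) * ((ω : E) k * ⟪(ω : E), v⟫) + ((v k / (1 + p)) * ((ω : E) l * ⟪(ω : E), v⟫)
      + (v k * v l * 1 + ((-2 * v k * v l / (1 + p)) * ⟪(ω : E), v⟫
      + (v k * v l / (1 + p) ^ 2) * (⟪(ω : E), v⟫ * ⟪(ω : E), v⟫))))))) := by
    intro ω
    have hω : ‖(ω : E)‖ = 1 := by simp
    simp only [boost, hω, norm_neg, ← hpdef, inner_neg_right, PiLp.add_apply, PiLp.smul_apply,
      PiLp.neg_apply, smul_eq_mul]
    field_simp
    ring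
  simp only [e]
  have i1 := int_of_cont (fun x => x k * x l) (by fun_prop)
  have i2 := int_of_cont (fun x => (-v l) * x k) (by fun_prop)
  have i3 := int_of_cont (fun x => (-v k) * x l) (by fun_prop)
  have i4 := int_of_cont (fun x => (v l / (1 + p)) * (x k * ⟪x, v⟫)) (by fun_prop)
  have i5 := int_of_cont (fun x => (v k / (1 + p)) * (x l * ⟪x, v⟫)) (by fun_prop)
  have i6 := int_of_cont (fun x => v k * v l * 1) (by fun_prop)
  have i7 := int_of_cont (fun x => (-2 * v k * v l / (1 + p)) * ⟪x, v⟫) (by fun_prop)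
  have i8 := int_of_cont (fun x => (v k * v l / (1 + p) ^ 2) * (⟪x, v⟫ * ⟪x, v⟫)) (by fun_prop)
  have j7 := i7.add i8
  have j6 := i6.add j7
  have j5 := i5.add j6
  have j4 := i4.add j5
  have j3 := i3.add j4
  have j2 := i2.add j3
  refine (integral_add i1 j2).trans ?_
  refine (congrArg _ ((integral_add i2 j3).trans (congrArg _ ((integral_add i3 j4).trans
    (congrArg _ ((integral_add i4 j5).trans (congrArg _ ((integral_add i5 j6).trans
    (congrArg _ ((integral_add i6 j7).trans (congrArg _ (integral_add i7 i8)))))))))))).trans ?_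
  simp only [integral_const_mul, sphere_quad, sphere_lin, sphere_inner, sphere_inner1,
    sphere_inner2, sphere_one, hv]
  generalize (if k = l then (1:ℝ) else 0) = d
  field_simp
  ring

end VKG

/-- For `v ∈ ℝ³` and `1 ≤ k, ℓ ≤ 3`,
`∫_{|ω|=1} ω_k ω_ℓ dω/(√(1+|v|²)+ω·v)⁴ = (16π/3) v_k v_ℓ + (4π/3) δ_{kℓ}`. -/
theorem vkg_sphere_integral_quartic (k l : Fin 3) (v : EuclideanSpace ℝ (Fin 3)) :
    ∫ ω : Metric.sphere (0 : EuclideanSpace ℝ (Fin 3)) 1,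
        (ω : EuclideanSpace ℝ (Fin 3)) k * (ω : EuclideanSpace ℝ (Fin 3)) l
          / (Real.sqrt (1 + ‖v‖ ^ 2) + ⟪(ω : EuclideanSpace ℝ (Fin 3)), v⟫) ^ 4
      ∂((volume : Measure (EuclideanSpace ℝ (Fin 3))).toSphere)
    = (16 * π / 3) * v k * v l + (4 * π / 3) * (if k = l then (1 : ℝ) else 0) := by
  exact (VKG.reduce k l v).trans (VKG.final k l v)
end
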